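/- arXiv:1404.7379 — 2 statements merged into one kernel-verified Lean document; each statement's English description precedes it below -/
import Mathlib

section
/- Multiplicative identity for S-forms used in the Buchberger criterion: let g₁, g₂ be nonzero elements of K[x₁,…,xₙ]^d whose initial terms lie in the same component e_j, and let x^a, x^b be monomials of K[x₁,…,xₙ]. Set x := LCM(in_{w,≺}(x^a·g₁), in_{w,≺}(x^b·g₂)) and x₁₂ := LCM(in_{w,≺}(g₁), in_{w,≺}(g₂)) (both nonzero module monomials in component e_j). Then the module monomial x₁₂ divides x and S-form(x^a·g₁, x^b·g₂) = (x / x₁₂) · S-form(g₁, g₂). -/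
open MvPolynomial

/-- A (real-valued, additive) valuation on a field `K`:
`v(ab) = v(a)+v(b)` for nonzero `a,b`, `v(a+b) ≥ min(v a, v b)`, and `v a = ∞ ↔ a = 0`. -/
structure ValOn (K : Type*) [Field K] where
  v : K → WithTop ℝ
  v_mul : ∀ a b : K, a ≠ 0 → b ≠ 0 → v (a * b) = v a + v b
  v_add_min : ∀ a b : K, min (v a) (v b) ≤ v (a + b)
  v_eq_top_iff : ∀ a : K, v a = ⊤ ↔ a = 0

/-- A module monomial `x^u·e_k` of `R[x₁,…,xₙ]^d`, recorded as the pair `(u, k)`. -/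
abbrev MMon (n d : ℕ) := (Fin n →₀ ℕ) × Fin d

/-- A term `c·x^u·e_k`, recorded as `(c, (u, k))`. -/
abbrev Term (R : Type*) (n d : ℕ) := R × MMon n d

/-- The strict order on module monomials induced by the monomial order `mo`:
`x^α·e_i ≺ x^β·e_j` iff `x^α ≺ x^β`, or `x^α = x^β` and `i < j`. -/
def mmLt {n d : ℕ} (mo : MonomialOrder (Fin n)) (a b : MMon n d) : Prop :=
  mo.toSyn a.1 < mo.toSyn b.1 ∨ (a.1 = b.1 ∧ a.2 < b.2)

/-- The dot product `w·u` of a weight vector with an exponent vector. -/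
def wdot {n : ℕ} (w : Fin n → ℝ) (u : Fin n →₀ ℕ) : ℝ := ∑ i, w i * (u i : ℝ)

/-- The weight `ν(c) + w·u` of a term `c·x^u·e_k`. -/
def twt {R : Type*} {n d : ℕ} (ν : R → WithTop ℝ) (w : Fin n → ℝ) (t : Term R n d) :
    WithTop ℝ :=
  ν t.1 + (wdot w t.2.1 : ℝ)

/-- The term (pre)order: `c·x^u·e_i ≤ c'·x^{u'}·e_j` iff `ν(c) + w·u < ν(c') + w·u'`, or
they are equal and `x^u·e_i ⪰ x^{u'}·e_j` (smaller terms are "more initial"). -/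
def termLE {R : Type*} {n d : ℕ} (ν : R → WithTop ℝ) (w : Fin n → ℝ)
    (mo : MonomialOrder (Fin n)) (t t' : Term R n d) : Prop :=
  twt ν w t < twt ν w t' ∨
    (twt ν w t = twt ν w t' ∧ (mmLt mo t'.2 t.2 ∨ t.2 = t'.2))

/-- The coefficient of `f ∈ R[x₁,…,xₙ]^d` at the module monomial `m = (u, k)`. -/
def coeffM {R : Type*} [CommSemiring R] {n d : ℕ} (f : Fin d → MvPolynomial (Fin n) R)
    (m : MMon n d) : R :=
  coeff m.1 (f m.2)

/-- `t` is the initial term `in_{w,≺}(f)` of `f`: it is a term of `f` which is least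
in the term order among all terms of `f`. -/
def IsInit {R : Type*} [CommSemiring R] {n d : ℕ} (ν : R → WithTop ℝ) (w : Fin n → ℝ)
    (mo : MonomialOrder (Fin n)) (f : Fin d → MvPolynomial (Fin n) R) (t : Term R n d) : Prop :=
  t.1 ≠ 0 ∧ coeffM f t.2 = t.1 ∧
    ∀ m : MMon n d, coeffM f m ≠ 0 → termLE ν w mo t (coeffM f m, m)

/-- The term `c·x^u·e_k` as an element of `R[x₁,…,xₙ]^d`. -/
noncomputable def termEl {R : Type*} [CommSemiring R] {n d : ℕ} (t : Term R n d) :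
    Fin d → MvPolynomial (Fin n) R :=
  Pi.single t.2.2 (monomial t.2.1 t.1)

/-- The initial submodule `in_{w,≺}(I)`: the submodule generated by the initial terms of
the nonzero elements of `I`. -/
noncomputable def inSub {R : Type*} [CommRing R] {n d : ℕ} (ν : R → WithTop ℝ)
    (w : Fin n → ℝ) (mo : MonomialOrder (Fin n))
    (I : Submodule (MvPolynomial (Fin n) R) (Fin d → MvPolynomial (Fin n) R)) :
    Submodule (MvPolynomial (Fin n) R) (Fin d → MvPolynomial (Fin n) R) :=
  Submodule.span _ {g | ∃ f ∈ I, f ≠ 0 ∧ ∃ t : Term R n d, IsInit ν w mo f t ∧ g = termEl t}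

/-- `f ∈ R[x₁,…,xₙ]^d` is homogeneous (of some degree `δ`). -/
def IsHomog {R : Type*} [CommSemiring R] {n d : ℕ} (f : Fin d → MvPolynomial (Fin n) R) : Prop :=
  ∃ δ : ℕ, ∀ m : MMon n d, coeffM f m ≠ 0 → (∑ i, m.1 i) = δ

/-- The S-form of `f, g` whose initial terms `tf = c·x^α·e_j`, `tg = c'·x^β·e_j` lie in the
same component: `S-form(f,g) = (x^{α⊔β−α}/c)·f − (x^{α⊔β−β}/c')·g`. -/
noncomputable def sForm {K : Type*} [Field K] {n d : ℕ}
    (f g : Fin d → MvPolynomial (Fin n) K) (tf tg : Term K n d) :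
    Fin d → MvPolynomial (Fin n) K :=
  (monomial (tf.2.1 ⊔ tg.2.1 - tf.2.1) tf.1⁻¹ : MvPolynomial (Fin n) K) • f -
    (monomial (tf.2.1 ⊔ tg.2.1 - tg.2.1) tg.1⁻¹ : MvPolynomial (Fin n) K) • g

lemma wdot_add_aux {n : ℕ} (w : Fin n → ℝ) (a u : Fin n →₀ ℕ) :
    wdot w (a + u) = wdot w u + wdot w a := by
  simp only [wdot, ← Finset.sum_add_distrib]
  refine Finset.sum_congr rfl fun i _ => ?_
  simp only [Finsupp.add_apply]
  push_cast
  ring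

lemma mmLt_asymm_aux {n d : ℕ} (mo : MonomialOrder (Fin n)) (x y : MMon n d)
    (h : mmLt mo x y) (h' : mmLt mo y x) : False := by
  rcases h with h | ⟨h, h2⟩ <;> rcases h' with h' | ⟨h', h2'⟩
  · exact lt_asymm h h'
  · rw [h'] at h; exact lt_irrefl _ h
  · rw [h] at h'; exact lt_irrefl _ h'
  · exact lt_asymm h2 h2'

/-- Translating both terms by `x^a` reflects the term order. -/
lemma termLE_shift_aux {K : Type*} {n d : ℕ} (ν : K → WithTop ℝ) (w : Fin n → ℝ)
    (mo : MonomialOrder (Fin n)) (a u u' : Fin n →₀ ℕ) (k k' : Fin d) (c c' : K)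
    (h : termLE ν w mo (c, (a + u, k)) (c', (a + u', k'))) :
    termLE ν w mo (c, (u, k)) (c', (u', k')) := by
  simp only [termLE, twt, mmLt, wdot_add_aux, WithTop.coe_add, ← add_assoc, map_add,
    Prod.mk.injEq, add_right_inj, add_lt_add_iff_left] at h ⊢
  rw [WithTop.add_lt_add_iff_right WithTop.coe_ne_top,
    WithTop.add_right_inj WithTop.coe_ne_top] at h
  exact h

lemma termLE_antisymm_aux {K : Type*} {n d : ℕ} (ν : K → WithTop ℝ) (w : Fin n → ℝ)
    (mo : MonomialOrder (Fin n)) (t t' : Term K n d)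
    (h : termLE ν w mo t t') (h' : termLE ν w mo t' t) : t.2 = t'.2 := by
  rcases h with h | ⟨h, h2⟩ <;> rcases h' with h' | ⟨h', h2'⟩
  · exact (lt_asymm h h').elim
  · exact (h.ne h'.symm).elim
  · exact (h'.ne h.symm).elim
  · rcases h2 with h2 | h2
    · rcases h2' with h2' | h2'
      · exact (mmLt_asymm_aux mo _ _ h2 h2').elim
      · exact h2'.symm
    · exact h2

/-- The initial term of `x^a·g` is `x^a` times the initial term of `g`. -/
lemma isInit_monomial_smul_aux {K : Type*} [Field K] {n d : ℕ} (ν : K → WithTop ℝ)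
    (w : Fin n → ℝ) (mo : MonomialOrder (Fin n)) (g : Fin d → MvPolynomial (Fin n) K)
    (t t' : Term K n d) (a : Fin n →₀ ℕ) (h : IsInit ν w mo g t)
    (h' : IsInit ν w mo ((monomial a (1 : K) : MvPolynomial (Fin n) K) • g) t') :
    t' = (t.1, (a + t.2.1, t.2.2)) := by
  obtain ⟨c, u, k⟩ := t
  obtain ⟨c', u', k'⟩ := t'
  obtain ⟨h0, hc, hm⟩ := h
  obtain ⟨h0', hc', hm'⟩ := h'
  have key : ∀ v j, coeffM ((monomial a (1 : K) : MvPolynomial (Fin n) K) • g) (a + v, j)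
      = coeffM g (v, j) := by
    intro v j
    simp [coeffM, coeff_monomial_mul]
  dsimp only at h0 hc h0' hc'
  have hle : a ≤ u' := by
    by_contra hn
    apply h0'
    rw [← hc']
    simp [coeffM, coeff_monomial_mul', hn]
  obtain ⟨v, rfl⟩ := exists_add_of_le hle
  rw [key] at hc'
  have e1 := hm (v, k') (by rw [hc']; exact h0')
  have e2 := hm' (a + u, k) (by rw [key, hc]; exact h0)
  rw [hc'] at e1
  rw [key, hc] at e2
  have e := termLE_antisymm_aux ν w mo _ _ e1 (termLE_shift_aux ν w mo _ _ _ _ _ _ _ e2)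
  simp only [Prod.mk.injEq] at e
  obtain ⟨rfl, rfl⟩ := e
  rw [hc] at hc'
  rw [hc']

/-- **Multiplicative identity for S-forms**: if `g₁, g₂` are nonzero with initial terms
`t₁, t₂` in the same component, `x^a, x^b` are monomials, and `t₁', t₂'` are the initial
terms of `x^a·g₁, x^b·g₂`, then `x₁₂ := LCM(in(g₁), in(g₂))` divides
`x := LCM(in(x^a·g₁), in(x^b·g₂))` and
`S-form(x^a·g₁, x^b·g₂) = (x/x₁₂)·S-form(g₁, g₂)`. -/
theorem sForm_monomial_mul {K : Type*} [Field K] {n d : ℕ}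
    (V : ValOn K) (w : Fin n → ℝ) (mo : MonomialOrder (Fin n))
    (g₁ g₂ : Fin d → MvPolynomial (Fin n) K) (hg₁ : g₁ ≠ 0) (hg₂ : g₂ ≠ 0)
    (t₁ t₂ : Term K n d)
    (h₁ : IsInit V.v w mo g₁ t₁) (h₂ : IsInit V.v w mo g₂ t₂)
    (hcomp : t₁.2.2 = t₂.2.2)
    (a b : Fin n →₀ ℕ) (t₁' t₂' : Term K n d)
    (h₁' : IsInit V.v w mo ((monomial a (1 : K) : MvPolynomial (Fin n) K) • g₁) t₁')
    (h₂' : IsInit V.v w mo ((monomial b (1 : K) : MvPolynomial (Fin n) K) • g₂) t₂') :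
    t₁'.2.2 = t₁.2.2 ∧ t₂'.2.2 = t₂.2.2 ∧
    t₁.2.1 ⊔ t₂.2.1 ≤ t₁'.2.1 ⊔ t₂'.2.1 ∧
    sForm ((monomial a (1 : K) : MvPolynomial (Fin n) K) • g₁)
        ((monomial b (1 : K) : MvPolynomial (Fin n) K) • g₂) t₁' t₂' =
      (monomial (t₁'.2.1 ⊔ t₂'.2.1 - t₁.2.1 ⊔ t₂.2.1) (1 : K) : MvPolynomial (Fin n) K) •
        sForm g₁ g₂ t₁ t₂ := by
  obtain rfl := isInit_monomial_smul_aux V.v w mo g₁ t₁ t₁' a h₁ h₁'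
  obtain rfl := isInit_monomial_smul_aux V.v w mo g₂ t₂ t₂' b h₂ h₂'
  have hle : t₁.2.1 ⊔ t₂.2.1 ≤ (a + t₁.2.1) ⊔ (b + t₂.2.1) :=
    sup_le_sup le_add_self le_add_self
  refine ⟨rfl, rfl, hle, ?_⟩
  have e1 : (a + t₁.2.1) ⊔ (b + t₂.2.1) - (a + t₁.2.1) + a =
      (a + t₁.2.1) ⊔ (b + t₂.2.1) - t₁.2.1 ⊔ t₂.2.1 + (t₁.2.1 ⊔ t₂.2.1 - t₁.2.1) := by
    ext i
    simp only [Finsupp.add_apply, Finsupp.tsub_apply, Finsupp.sup_apply]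
    omega
  have e2 : (a + t₁.2.1) ⊔ (b + t₂.2.1) - (b + t₂.2.1) + b =
      (a + t₁.2.1) ⊔ (b + t₂.2.1) - t₁.2.1 ⊔ t₂.2.1 + (t₁.2.1 ⊔ t₂.2.1 - t₂.2.1) := by
    ext i
    simp only [Finsupp.add_apply, Finsupp.tsub_apply, Finsupp.sup_apply]
    omega
  simp only [sForm, smul_sub, smul_smul, monomial_mul, one_mul, mul_one, e1, e2]
end

section
/- Idempotence of the initial submodule operation: for every submodule I of K[x₁,…,xₙ]^d over a field K with valuation, one has in_{w,≺}(in_{w,≺}(I)) = in_{w,≺}(I). -/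
open MvPolynomial

theorem termEl_coeffM_ne {K : Type*} [Field K] {n d : ℕ} (t : Term K n d) (m : MMon n d)
    (h : m ≠ t.2) : coeffM (termEl t) m = 0 := by
  classical
  obtain ⟨c, u, k⟩ := t
  obtain ⟨u', k'⟩ := m
  simp only [coeffM, termEl]
  by_cases hk : k' = k
  · subst hk
    have : u ≠ u' := by rintro rfl; exact h rfl
    simp [coeff_monomial, this]
  · simp [Pi.single_eq_of_ne hk]

theorem termEl_coeffM_mem {K : Type*} [Field K] {n d : ℕ}
    (S : Set (Fin d → MvPolynomial (Fin n) K))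
    (hS : ∀ g ∈ S, ∃ t : Term K n d, g = termEl t)
    (f : Fin d → MvPolynomial (Fin n) K)
    (hf : f ∈ Submodule.span (MvPolynomial (Fin n) K) S) :
    ∀ m : MMon n d, termEl (coeffM f m, m) ∈ Submodule.span (MvPolynomial (Fin n) K) S := by
  classical
  induction hf using Submodule.span_induction with
  | mem g hg =>
    intro m
    obtain ⟨t, rfl⟩ := hS g hg
    by_cases h : m = t.2
    · have h2 : ((coeffM (termEl t) m, m) : Term K n d) = t := by
        subst h
        simp [coeffM, termEl]
      rw [h2]
      exact Submodule.subset_span hg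
    · have h2 : coeffM (termEl t) m = 0 := termEl_coeffM_ne t m h
      rw [h2]
      simp [termEl]
  | zero => intro m; simp [termEl, coeffM]
  | add x y _ _ hx hy =>
    intro m
    have := Submodule.add_mem _ (hx m) (hy m)
    simpa [termEl, coeffM, ← Pi.single_add] using this
  | smul p x _ hx =>
    rintro ⟨u, k⟩
    have h2 : termEl (coeffM (p • x) (u, k), (u, k)) =
        ∑ q ∈ Finset.HasAntidiagonal.antidiagonal u, (monomial q.1 (coeff q.1 p)) •
          termEl (coeffM x (q.2, k), (q.2, k)) := by
      funext j
      simp only [termEl, coeffM, Pi.smul_apply, smul_eq_mul, coeff_mul, Finset.sum_apply]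
      by_cases hj : j = k
      · subst hj
        simp only [Pi.single_eq_same, monomial_mul, map_sum]
        refine Finset.sum_congr rfl fun q hq => ?_
        rw [Finset.HasAntidiagonal.mem_antidiagonal.1 hq]
      · simp [Pi.single_eq_of_ne hj]
    rw [h2]
    exact Submodule.sum_mem _ fun q _ => Submodule.smul_mem _ _ (hx _)

/-- **Idempotence of the initial submodule operation**: for every submodule `I` of
`K[x₁,…,xₙ]^d` over a field `K` with valuation, `in_{w,≺}(in_{w,≺}(I)) = in_{w,≺}(I)`. -/
theorem inSub_idem {K : Type*} [Field K] {n d : ℕ}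
    (V : ValOn K) (w : Fin n → ℝ) (mo : MonomialOrder (Fin n))
    (I : Submodule (MvPolynomial (Fin n) K) (Fin d → MvPolynomial (Fin n) K)) :
    inSub V.v w mo (inSub V.v w mo I) = inSub V.v w mo I := by
  apply le_antisymm
  · refine Submodule.span_le.2 ?_
    rintro g ⟨f, hf, -, t, ht, rfl⟩
    have h := termEl_coeffM_mem _ (by rintro g ⟨_, _, _, t, _, h⟩; exact ⟨t, h⟩) f hf t.2
    rw [ht.2.1] at h
    exact h
  · refine Submodule.span_le.2 ?_
    rintro g ⟨f, hf, hf0, t, ht, rfl⟩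
    have hc : coeffM (termEl t) t.2 = t.1 := by simp [coeffM, termEl]
    refine Submodule.subset_span ⟨termEl t, Submodule.subset_span ⟨f, hf, hf0, t, ht, rfl⟩,
      ?_, t, ⟨ht.1, hc, ?_⟩, rfl⟩
    · intro h0
      apply ht.1
      rw [← hc, h0]
      simp [coeffM]
    · intro m hm
      have hmt : m = t.2 := by
        by_contra h
        exact hm (termEl_coeffM_ne t m h)
      subst hmt
      rw [hc]
      exact Or.inr ⟨rfl, Or.inr rfl⟩
end
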